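/- Let n = 3. There exists a finite constant C > 0 such that ‖T(f₁,f₂,f₃)‖_{5/4} ≤ C ‖f₁‖_{5/3} ‖f₂‖_{5/3} ‖f₃‖_1 for all nonnegative measurable functions f₁, f₂, f₃ on ℝ; that is, T is of strong type at the point N^{*3} = (3/5, 3/5, 1; 4/5), a dual point of N = (3/5, 3/5, 1/5; 0). -/

import Mathlib

open MeasureTheory ENNReal

/-- The `L^p` "norm" (with respect to Lebesgue measure on `ℝ`) of an
`ℝ≥0∞`-valued function, with the convention for `p = ∞`. -/
noncomputable def lpNorm (p : ℝ≥0∞) (g : ℝ → ℝ≥0∞) : ℝ≥0∞ :=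
  if p = ∞ then essSup g (volume : Measure ℝ)
  else (∫⁻ x, g x ^ p.toReal) ^ (1 / p.toReal)

/-- The normalized (total mass 1) surface measure on the unit sphere
`S^{n-1} ⊂ ℝ^n`, viewed as a measure on `ℝ^n` supported on the sphere. -/
noncomputable def normSphere (n : ℕ) : Measure (EuclideanSpace ℝ (Fin n)) :=
  (Measure.map Subtype.val
      ((volume : Measure (EuclideanSpace ℝ (Fin n))).toSphere) Set.univ)⁻¹ •
    Measure.map Subtype.val ((volume : Measure (EuclideanSpace ℝ (Fin n))).toSphere)

/-- The multilinear spherical average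
`T(f₁,…,fₙ)(x) = ∫_{S^{n-1}} ∏_{j=1}^n f_j(x - σ_j) dσ(σ)`. -/
noncomputable def sphAvg (n : ℕ) (f : Fin n → ℝ → ℝ) (x : ℝ) : ℝ≥0∞ :=
  ∫⁻ σ, ∏ j, ENNReal.ofReal (f j (x - σ j)) ∂(normSphere n)

/-- Polar integration on the unit ball of a function that is constant on rays. -/
theorem lintegral_ball_comp_normalize {E : Type*} [NormedAddCommGroup E] [NormedSpace ℝ E]
    [MeasurableSpace E] [BorelSpace E] [FiniteDimensional ℝ E] [Nontrivial E] (μ : Measure E)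
    [μ.IsAddHaarMeasure] {h : E → ℝ≥0∞} (hh : Measurable h) :
    ∫⁻ x, (Metric.ball (0 : E) 1).indicator (fun x ↦ h (‖x‖⁻¹ • x)) x ∂μ =
      ENNReal.ofReal (1 / Module.finrank ℝ E) * ∫⁻ σ, h σ.1 ∂μ.toSphere := by
  have hm := μ.measurePreserving_homeomorphUnitSphereProd
  have hk : Measurable ((Metric.ball (0 : E) 1).indicator (fun x ↦ h (‖x‖⁻¹ • x))) := by
    refine Measurable.indicator ?_ measurableSet_ball
    exact hh.comp (by fun_prop)
  set k := (Metric.ball (0 : E) 1).indicator (fun x ↦ h (‖x‖⁻¹ • x))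
  have h1 : ∫⁻ x, k x ∂μ = ∫⁻ x : ({0}ᶜ : Set E), k x ∂(μ.comap (↑)) := by
    rw [lintegral_subtype_comap (measurableSet_singleton _).compl,
      restrict_compl_singleton]
  have h2 := hm.lintegral_comp_emb (homeomorphUnitSphereProd E).measurableEmbedding
    (fun p ↦ h p.1 * (Set.Iio (⟨1, Set.mem_Ioi.2 one_pos⟩ : Set.Ioi (0 : ℝ))).indicator 1 p.2)
  rw [h1]
  calc _ = _ := lintegral_congr fun x ↦ ?_
    _ = _ := h2
    _ = _ := ?_
  · simp only [k, homeomorphUnitSphereProd_apply_fst_coe]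
    by_cases hx : ‖(x : E)‖ < 1
    · have : (homeomorphUnitSphereProd E x).2 ∈ Set.Iio
          (⟨1, Set.mem_Ioi.2 one_pos⟩ : Set.Ioi (0 : ℝ)) := by
        rw [Set.mem_Iio, ← Subtype.coe_lt_coe]
        simpa using hx
      simp [this, hx]
    · have : (homeomorphUnitSphereProd E x).2 ∉ Set.Iio
          (⟨1, Set.mem_Ioi.2 one_pos⟩ : Set.Ioi (0 : ℝ)) := by
        rw [Set.mem_Iio, ← Subtype.coe_lt_coe]
        simpa using hx
      rw [Set.indicator_of_notMem this, Set.indicator_of_notMem (by simpa using hx), mul_zero]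
  · rw [lintegral_prod_mul (f := fun σ : Metric.sphere (0 : E) 1 ↦ h σ) (by fun_prop)
      ((measurable_one.indicator measurableSet_Iio).aemeasurable),
      lintegral_indicator_one measurableSet_Iio, Measure.volumeIoiPow_apply_Iio, mul_comm]
    have : ((Module.finrank ℝ E - 1 : ℕ) : ℝ) + 1 = Module.finrank ℝ E := by
      rw [Nat.cast_pred Module.finrank_pos, sub_add_cancel]
    simp [this]

theorem lintegral_eq_of_orthonormal {v : Fin 3 → EuclideanSpace ℝ (Fin 3)} (hv : Orthonormal ℝ v)
    {k : EuclideanSpace ℝ (Fin 3) → ℝ≥0∞} (hk : Measurable k) :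
    ∫⁻ x, k x = ∫⁻ p : ℝ × ℝ × ℝ, k (p.1 • v 0 + p.2.1 • v 1 + p.2.2 • v 2) := by
  obtain ⟨b, hb⟩ := Orthonormal.exists_orthonormalBasis_extension_of_card_eq
    (s := Set.univ) (v := v) (by simp)
    (hv.comp (fun x : (Set.univ : Set (Fin 3)) ↦ x.1) Subtype.val_injective)
  have e1 := b.measurePreserving_repr_symm
  have e2 := EuclideanSpace.volume_preserving_symm_measurableEquiv_toLp (Fin 3)
  have e3 := (volume_preserving_piFinSuccAbove (fun _ : Fin 3 ↦ ℝ) 0).symm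
  have e4 := (volume_preserving_finTwoArrow ℝ).symm
  have e5 := (MeasurePreserving.id (volume : Measure ℝ)).prod e4
  have e := e1.comp (e2.symm.comp (e3.comp e5))
  rw [← e.lintegral_comp hk]
  refine lintegral_congr fun p ↦ ?_
  congr 1
  simp only [← hb _ (Set.mem_univ _)]
  simp only [Function.comp_apply, MeasurableEquiv.symm_symm, MeasurableEquiv.coe_toLp,
    ← b.sum_repr_symm, Fin.sum_univ_three]
  rfl

open Real in
theorem lintegral_polarCoord {f : ℝ × ℝ → ℝ≥0∞} (hf : Measurable f) :
    ∫⁻ p, f p = ∫⁻ θ in Set.Ioo (-π) π, ∫⁻ r in Set.Ioi (0 : ℝ),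
      ENNReal.ofReal r * f (r * cos θ, r * sin θ) := by
  rw [← lintegral_comp_polarCoord_symm]
  have : polarCoord.target = Set.Ioi (0 : ℝ) ×ˢ Set.Ioo (-π) π := rfl
  rw [this, Measure.volume_eq_prod, ← Measure.prod_restrict, lintegral_prod_symm]
  · simp [polarCoord_symm_apply]
  · simp only [polarCoord_symm_apply, smul_eq_mul]
    exact (by fun_prop : Measurable fun p : ℝ × ℝ ↦ ENNReal.ofReal p.1 *
      f (p.1 * cos p.2, p.1 * sin p.2)).aemeasurable

open Real in
theorem lintegral_halfPlane_polarCoord {f : ℝ × ℝ → ℝ≥0∞} (hf : Measurable f) :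
    ∫⁻ t, ∫⁻ s in Set.Ioi (0 : ℝ), f (t, s) = ∫⁻ φ in Set.Ioo 0 π, ∫⁻ r in Set.Ioi (0 : ℝ),
      ENNReal.ofReal r * f (r * cos φ, r * sin φ) := by
  have hS : MeasurableSet {p : ℝ × ℝ | 0 < p.2} := measurableSet_lt measurable_const measurable_snd
  have h1 : ∫⁻ t, ∫⁻ s in Set.Ioi (0 : ℝ), f (t, s) =
      ∫⁻ p, {p : ℝ × ℝ | 0 < p.2}.indicator f p := by
    rw [Measure.volume_eq_prod, lintegral_prod _ (hf.indicator hS).aemeasurable]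
    refine lintegral_congr fun t ↦ ?_
    rw [← lintegral_indicator measurableSet_Ioi]
    rfl
  rw [h1, lintegral_polarCoord (hf.indicator hS)]
  rw [← Set.inter_eq_right.2 (Set.Ioo_subset_Ioo_left (by linarith [pi_pos]) :
    Set.Ioo 0 π ⊆ Set.Ioo (-π) π), Set.inter_comm,
    ← setLIntegral_indicator measurableSet_Ioo]
  refine setLIntegral_congr_fun measurableSet_Ioo fun φ hφ ↦ ?_
  by_cases h : φ ∈ Set.Ioo 0 π
  · rw [Set.indicator_of_mem h]
    refine setLIntegral_congr_fun measurableSet_Ioi fun r hr ↦ ?_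
    simp [mul_pos (Set.mem_Ioi.1 hr) (sin_pos_of_mem_Ioo h)]
  · rw [Set.indicator_of_notMem h]
    have hs : sin φ ≤ 0 := sin_nonpos_of_nonpos_of_neg_pi_le
      (not_lt.1 fun h' ↦ h ⟨h', hφ.2⟩) hφ.1.le
    rw [← lintegral_zero (μ := volume.restrict (Set.Ioi (0 : ℝ)))]
    refine setLIntegral_congr_fun measurableSet_Ioi fun r hr ↦ ?_
    simp [(mul_nonpos_of_nonneg_of_nonpos (Set.mem_Ioi.1 hr).le hs).not_gt]

open Real in
theorem lintegral_eq_spherical {G : ℝ × ℝ × ℝ → ℝ≥0∞} (hG : Measurable G) :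
    ∫⁻ p, G p = ∫⁻ φ in Set.Ioo 0 π, ∫⁻ θ in Set.Ioo (-π) π, ∫⁻ r in Set.Ioi (0 : ℝ),
      ENNReal.ofReal r * (ENNReal.ofReal (r * sin φ) *
        G (r * cos φ, r * sin φ * cos θ, r * sin φ * sin θ)) := by
  calc ∫⁻ p, G p = ∫⁻ t, ∫⁻ q, G (t, q) := by
        rw [Measure.volume_eq_prod, lintegral_prod _ hG.aemeasurable]
    _ = ∫⁻ t, ∫⁻ θ in Set.Ioo (-π) π, ∫⁻ s in Set.Ioi (0 : ℝ),
        ENNReal.ofReal s * G (t, s * cos θ, s * sin θ) :=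
      lintegral_congr fun t ↦ lintegral_polarCoord (by fun_prop)
    _ = ∫⁻ θ in Set.Ioo (-π) π, ∫⁻ t, ∫⁻ s in Set.Ioi (0 : ℝ),
        ENNReal.ofReal s * G (t, s * cos θ, s * sin θ) := by
      refine lintegral_lintegral_swap (Measurable.aemeasurable ?_)
      exact Measurable.lintegral_prod_right' (f := fun p : (ℝ × ℝ) × ℝ ↦
        ENNReal.ofReal p.2 * G (p.1.1, p.2 * cos p.1.2, p.2 * sin p.1.2)) (by fun_prop)
    _ = ∫⁻ θ in Set.Ioo (-π) π, ∫⁻ φ in Set.Ioo 0 π, ∫⁻ r in Set.Ioi (0 : ℝ),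
        ENNReal.ofReal r * (ENNReal.ofReal (r * sin φ) *
        G (r * cos φ, r * sin φ * cos θ, r * sin φ * sin θ)) :=
      lintegral_congr fun θ ↦ lintegral_halfPlane_polarCoord
        (f := fun p ↦ ENNReal.ofReal p.2 * G (p.1, p.2 * cos θ, p.2 * sin θ)) (by fun_prop)
    _ = _ := by
      refine lintegral_lintegral_swap (Measurable.aemeasurable ?_)
      exact Measurable.lintegral_prod_right' (f := fun p : (ℝ × ℝ) × ℝ ↦
        ENNReal.ofReal p.2 * (ENNReal.ofReal (p.2 * sin p.1.2) *
        G (p.2 * cos p.1.2, p.2 * sin p.1.2 * cos p.1.1, p.2 * sin p.1.2 * sin p.1.1)))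
        (by fun_prop)

open Real in
theorem lintegral_cos_mul_sin (F : ℝ → ℝ≥0∞) :
    ∫⁻ φ in Set.Ioo 0 π, ENNReal.ofReal (sin φ) * F (cos φ) = ∫⁻ t in Set.Ioo (-1 : ℝ) 1, F t := by
  have himg : cos '' Set.Ioo 0 π = Set.Ioo (-1 : ℝ) 1 := by
    ext t
    constructor
    · rintro ⟨φ, hφ, rfl⟩
      have := sin_pos_of_mem_Ioo hφ
      have := sin_sq_add_cos_sq φ
      constructor <;> nlinarith
    · rintro ⟨h1, h2⟩
      exact ⟨arccos t, ⟨arccos_pos.2 h2, arccos_lt_pi.2 h1⟩, cos_arccos h1.le h2.le⟩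
  rw [← himg, lintegral_image_eq_lintegral_abs_deriv_mul measurableSet_Ioo
    (fun x _ ↦ (hasDerivAt_cos x).hasDerivWithinAt) (injOn_cos.mono Set.Ioo_subset_Icc_self)]
  refine setLIntegral_congr_fun measurableSet_Ioo fun φ hφ ↦ ?_
  simp [abs_of_pos (sin_pos_of_mem_Ioo hφ)]

theorem norm_eq_one_of_orthonormal {v : Fin 3 → EuclideanSpace ℝ (Fin 3)} (hv : Orthonormal ℝ v)
    {a b c : ℝ} (h : a ^ 2 + b ^ 2 + c ^ 2 = 1) : ‖a • v 0 + b • v 1 + c • v 2‖ = 1 := by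
  have h2 := hv.inner_sum ![a, b, c] ![a, b, c] Finset.univ
  simp only [Fin.sum_univ_three, Matrix.cons_val, real_inner_self_eq_norm_sq] at h2
  simp at h2
  nlinarith [norm_nonneg (a • v 0 + b • v 1 + c • v 2)]

open Real in
/-- Integration over the sphere in cylindrical coordinates around an arbitrary axis. -/
theorem lintegral_normSphere_three : ∃ K : ℝ≥0∞, K ≠ ∞ ∧
    ∀ v : Fin 3 → EuclideanSpace ℝ (Fin 3), Orthonormal ℝ v →
    ∀ h : EuclideanSpace ℝ (Fin 3) → ℝ≥0∞, Measurable h →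
    ∫⁻ σ, h σ ∂normSphere 3 = K * ∫⁻ t in Set.Ioo (-1 : ℝ) 1, ∫⁻ θ in Set.Ioo (-π) π,
      h (t • v 0 + (√(1 - t ^ 2) * cos θ) • v 1 + (√(1 - t ^ 2) * sin θ) • v 2) := by
  set c := (Measure.map Subtype.val
      ((volume : Measure (EuclideanSpace ℝ (Fin 3))).toSphere) Set.univ)⁻¹ with hc
  set κ := ∫⁻ r in Set.Ioo (0 : ℝ) 1, ENNReal.ofReal (r ^ 2)
  have hc' : c ≠ ∞ := by
    rw [hc, ne_eq, ENNReal.inv_eq_top, Measure.map_apply measurable_subtype_coe .univ]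
    simp [pi_pos]
  have hκ : κ ≠ ∞ := by
    refine ne_top_of_le_ne_top (b := ∫⁻ r in Set.Ioo (0 : ℝ) 1, 1) (by simp) ?_
    refine setLIntegral_mono measurable_const fun r hr ↦ ?_
    rw [ENNReal.ofReal_le_one]
    nlinarith [hr.1, hr.2]
  refine ⟨c * (ENNReal.ofReal (1 / 3))⁻¹ * κ, by finiteness, fun v hv h hh ↦ ?_⟩
  have hk : Measurable ((Metric.ball (0 : EuclideanSpace ℝ (Fin 3)) 1).indicator
      (fun x ↦ h (‖x‖⁻¹ • x))) := by
    refine Measurable.indicator ?_ measurableSet_ball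
    exact hh.comp (by fun_prop)
  have h1 := lintegral_ball_comp_normalize (volume : Measure (EuclideanSpace ℝ (Fin 3))) hh
  have h2 : ∫⁻ σ, h σ ∂normSphere 3 =
      c * ∫⁻ σ, h σ.1 ∂(volume : Measure (EuclideanSpace ℝ (Fin 3))).toSphere := by
    rw [normSphere, lintegral_smul_measure, lintegral_map hh measurable_subtype_coe]
    rfl
  have h0 : ENNReal.ofReal (1 / 3) ≠ 0 := by simp
  rw [lintegral_eq_of_orthonormal hv hk, lintegral_eq_spherical
    (G := fun p ↦ (Metric.ball (0 : EuclideanSpace ℝ (Fin 3)) 1).indicator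
      (fun x ↦ h (‖x‖⁻¹ • x)) (p.1 • v 0 + p.2.1 • v 1 + p.2.2 • v 2))
    (hk.comp (by fun_prop))] at h1
  rw [h2, mul_assoc, mul_assoc]
  congr 1
  rw [← one_mul (∫⁻ σ, _ ∂_), ← ENNReal.inv_mul_cancel h0 ENNReal.ofReal_ne_top, mul_assoc]
  congr 1
  simp only [finrank_euclideanSpace, Fintype.card_fin, Nat.cast_ofNat] at h1
  rw [← h1, ← lintegral_cos_mul_sin, ← lintegral_const_mul' _ _ hκ]
  refine setLIntegral_congr_fun measurableSet_Ioo fun φ hφ ↦ ?_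
  have hs := sin_pos_of_mem_Ioo hφ
  have hsq : √(1 - cos φ ^ 2) = sin φ := by
    rw [← sin_sq, sqrt_sq hs.le]
  simp only [hsq]
  rw [← lintegral_const_mul _ (by fun_prop), ← lintegral_const_mul _ (by fun_prop)]
  refine lintegral_congr fun θ ↦ ?_
  set e := cos φ • v 0 + (sin φ * cos θ) • v 1 + (sin φ * sin θ) • v 2 with he
  have hne : ‖e‖ = 1 := norm_eq_one_of_orthonormal hv (by
    linear_combination sin_sq_add_cos_sq φ + sin φ ^ 2 * sin_sq_add_cos_sq θ)
  have : ∀ r ∈ Set.Ioi (0 : ℝ), ENNReal.ofReal r * (ENNReal.ofReal (r * sin φ) *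
      (Metric.ball 0 1).indicator (fun x ↦ h (‖x‖⁻¹ • x)) ((r * cos φ) • v 0 +
        (r * sin φ * cos θ) • v 1 + (r * sin φ * sin θ) • v 2)) =
      (Set.Iio 1).indicator (fun r ↦ ENNReal.ofReal (r ^ 2)) r *
        (ENNReal.ofReal (sin φ) * h e) := by
    intro r hr
    have hr' : 0 < r := hr
    have : (r * cos φ) • v 0 + (r * sin φ * cos θ) • v 1 + (r * sin φ * sin θ) • v 2 = r • e := by
      rw [he]; module
    rw [this]
    have hn : ‖r • e‖ = r := by rw [norm_smul, hne, mul_one, norm_of_nonneg hr'.le]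
    by_cases h1 : r < 1
    · rw [Set.indicator_of_mem (by simpa [hn] using h1), Set.indicator_of_mem (by simpa using h1),
        hn, smul_smul, inv_mul_cancel₀ hr'.ne', one_smul, ENNReal.ofReal_mul hr'.le, pow_two,
        ENNReal.ofReal_mul hr'.le]
      ring
    · rw [Set.indicator_of_notMem (by simpa [hn] using h1),
        Set.indicator_of_notMem (by simpa using h1)]
      simp
  have h3 := setLIntegral_congr_fun (μ := volume) measurableSet_Ioi this
  rw [h3, lintegral_mul_const _ (Measurable.indicator (by fun_prop) measurableSet_Iio),
    setLIntegral_indicator measurableSet_Iio]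
  congr 3
  ext; simp; tauto

theorem lintegral_abs_deriv_mul_comp_le {s : Set ℝ} (hs : MeasurableSet s) {φ φ' : ℝ → ℝ}
    (hφ : ∀ x, HasDerivAt φ (φ' x) x) (hinj : Set.InjOn φ s) (F : ℝ → ℝ≥0∞) :
    ∫⁻ x in s, ENNReal.ofReal |φ' x| * F (φ x) ≤ ∫⁻ x, F x := by
  rw [← lintegral_image_eq_lintegral_abs_deriv_mul hs (fun x _ ↦ (hφ x).hasDerivWithinAt) hinj]
  exact setLIntegral_le_lintegral _ _

theorem lintegral_comp_mul_left_le {c : ℝ} (hc : 1 ≤ c) (s : Set ℝ) (hs : MeasurableSet s)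
    (F : ℝ → ℝ≥0∞) : ∫⁻ x in s, F (c * x) ≤ ∫⁻ x, F x := by
  refine le_trans (lintegral_mono fun x ↦ ?_) (lintegral_abs_deriv_mul_comp_le hs
    (φ := fun x ↦ c * x) (φ' := fun _ ↦ c) (fun x ↦ by simpa using (hasDerivAt_id x).const_mul c)
    (fun x _ y _ h ↦ mul_left_cancel₀ (by positivity) h) F)
  refine le_mul_of_one_le_left' ?_
  rw [ENNReal.one_le_ofReal]
  exact hc.trans (le_abs_self c)

open Real in
theorem lintegral_comp_cos_le (A B : ℝ) (F : ℝ → ℝ≥0∞) :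
    ∫⁻ θ in Set.Ioo (-π) π, ENNReal.ofReal |B * sin θ| * F (A + B * cos θ) ≤ 2 * ∫⁻ x, F x := by
  rcases eq_or_ne B 0 with rfl | hB
  · simp
  have hd (x : ℝ) : HasDerivAt (fun θ ↦ A + B * cos θ) (-(B * sin x)) x := by
    simpa using ((hasDerivAt_cos x).const_mul B).const_add A
  have key {s : Set ℝ} (hs : MeasurableSet s) (hi : Set.InjOn cos s) :
      ∫⁻ θ in s, ENNReal.ofReal |B * sin θ| * F (A + B * cos θ) ≤ ∫⁻ x, F x := by
    simpa only [abs_neg] using lintegral_abs_deriv_mul_comp_le hs hd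
      (fun x hx y hy h ↦ hi hx hy (mul_left_cancel₀ hB (add_left_cancel h))) F
  have h1 : Set.InjOn cos (Set.Icc (-π) 0) := by
    intro x hx y hy h
    rw [← cos_neg x, ← cos_neg y] at h
    exact neg_injective (injOn_cos ⟨by linarith [hx.2], by linarith [hx.1]⟩
      ⟨by linarith [hy.2], by linarith [hy.1]⟩ h)
  calc _ ≤ ∫⁻ θ in Set.Icc (-π) 0 ∪ Set.Icc 0 π,
        ENNReal.ofReal |B * sin θ| * F (A + B * cos θ) := by
        refine lintegral_mono_set fun x hx ↦ ?_
        rcases le_total x 0 with h | h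
        exacts [Or.inl ⟨hx.1.le, h⟩, Or.inr ⟨h, hx.2.le⟩]
    _ ≤ _ := lintegral_union_le _ _ _
    _ ≤ _ := add_le_add (key measurableSet_Icc h1) (key measurableSet_Icc injOn_cos)
    _ = _ := (two_mul _).symm

open Real in
theorem lintegral_comp_sin_le (A B : ℝ) (F : ℝ → ℝ≥0∞) :
    ∫⁻ θ in Set.Ioo (-π) π, ENNReal.ofReal |B * cos θ| * F (A + B * sin θ) ≤ 3 * ∫⁻ x, F x := by
  rcases eq_or_ne B 0 with rfl | hB
  · simp
  have hd (x : ℝ) : HasDerivAt (fun θ ↦ A + B * sin θ) (B * cos x) x := by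
    simpa using ((hasDerivAt_sin x).const_mul B).const_add A
  have key {s : Set ℝ} (hs : MeasurableSet s) (hi : Set.InjOn sin s) :
      ∫⁻ θ in s, ENNReal.ofReal |B * cos θ| * F (A + B * sin θ) ≤ ∫⁻ x, F x :=
    lintegral_abs_deriv_mul_comp_le hs hd
      (fun x hx y hy h ↦ hi hx hy (mul_left_cancel₀ hB (add_left_cancel h))) F
  have h1 : Set.InjOn sin (Set.Icc (-π) (-(π / 2))) := by
    intro x hx y hy h
    have := injOn_cos (x₁ := -(x + π / 2)) (x₂ := -(y + π / 2))
      ⟨by linarith [hx.2], by linarith [hx.1, pi_pos]⟩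
      ⟨by linarith [hy.2], by linarith [hy.1, pi_pos]⟩
      (by simp only [cos_neg, cos_add_pi_div_two, h])
    linarith
  have h2 : Set.InjOn sin (Set.Icc (π / 2) π) := by
    intro x hx y hy h
    have := injOn_cos (x₁ := x - π / 2) (x₂ := y - π / 2)
      ⟨by linarith [hx.1], by linarith [hx.2, pi_pos]⟩
      ⟨by linarith [hy.1], by linarith [hy.2, pi_pos]⟩
      (by simp only [cos_sub_pi_div_two, h])
    linarith
  calc _ ≤ ∫⁻ θ in Set.Icc (-π) (-(π / 2)) ∪ Set.Icc (-(π / 2)) (π / 2) ∪ Set.Icc (π / 2) π,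
        ENNReal.ofReal |B * cos θ| * F (A + B * sin θ) := by
        refine lintegral_mono_set fun x hx ↦ ?_
        rcases le_total x (-(π / 2)) with h | h
        · exact Or.inl (Or.inl ⟨hx.1.le, h⟩)
        rcases le_total x (π / 2) with h' | h'
        exacts [Or.inl (Or.inr ⟨h, h'⟩), Or.inr ⟨h', hx.2.le⟩]
    _ ≤ _ := lintegral_union_le _ _ _
    _ ≤ _ := add_le_add (lintegral_union_le _ _ _) le_rfl
    _ ≤ _ := add_le_add (add_le_add (key measurableSet_Icc h1) (key measurableSet_Icc injOn_sin))
      (key measurableSet_Icc h2)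
    _ = _ := by ring

open Real in
theorem lintegral_inv_sqrt_abs_sin_mul_cos_ne_top :
    ∫⁻ θ in Set.Ioo (-π) π, ENNReal.ofReal √(√2 / |sin θ * cos θ|) ≠ ∞ := by
  set F : ℝ → ℝ≥0∞ := (Metric.ball 0 2).indicator fun x ↦ ENNReal.ofReal (1 / √|x|)
  have hFm : Measurable F := Measurable.indicator (by fun_prop) measurableSet_ball
  have hF : ∫⁻ x, F x ≠ ∞ := by
    rw [lintegral_indicator measurableSet_ball]
    have : IntegrableOn (fun x : ℝ ↦ 1 / √|x|) (Metric.ball 0 2) := by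
      refine integrableOn_ball_of_norm_le_rpow (C := 1) (α := 1 / 2) (by simp)
        (by norm_num) (Filter.Eventually.of_forall fun x ↦ ?_)
        (by fun_prop : Measurable fun x : ℝ ↦ 1 / √|x|).aestronglyMeasurable
      rw [norm_of_nonneg (by positivity), sqrt_eq_rpow, rpow_neg (norm_nonneg x), one_mul, one_div,
        norm_eq_abs]
    exact this.lintegral_lt_top.ne
  have hs := lintegral_comp_sin_le 0 1 F
  have hc := lintegral_comp_cos_le 0 1 F
  simp only [one_mul, zero_add] at hs hc
  refine ne_top_of_le_ne_top (b := 2 * (3 * ∫⁻ x, F x) + 2 * (2 * ∫⁻ x, F x)) (by finiteness) ?_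
  grw [← hs, ← hc]
  rw [← lintegral_const_mul _ (by fun_prop), ← lintegral_const_mul _ (by fun_prop),
    ← lintegral_add_left (by fun_prop)]
  refine lintegral_mono fun θ ↦ ?_
  have hFe (x : ℝ) (hx : |x| ≤ 1) : F x = ENNReal.ofReal (1 / √|x|) :=
    Set.indicator_of_mem (by simp; linarith) _
  have e2 : (2 : ℝ≥0∞) = ENNReal.ofReal 2 := by simp
  rw [hFe _ (abs_sin_le_one θ), hFe _ (abs_cos_le_one θ), e2, ← ENNReal.ofReal_mul (by positivity),
    ← ENNReal.ofReal_mul (by positivity), ← ENNReal.ofReal_mul (by positivity),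
    ← ENNReal.ofReal_mul (by positivity), ← ENNReal.ofReal_add (by positivity) (by positivity)]
  refine ENNReal.ofReal_le_ofReal ?_
  have key (x y : ℝ) (hx : 0 ≤ x) (hy : 1 ≤ 2 * y ^ 2) (hy0 : 0 ≤ y) :
      √(√2 / (x * y)) ≤ 2 * (y * (1 / √x)) := by
    rcases hx.eq_or_lt with rfl | hx
    · simp
    have hy1 : 0 < y := by nlinarith
    rw [show 2 * (y * (1 / √x)) = √(4 * y ^ 2 / x) by
      rw [sqrt_div (by positivity), show 4 * y ^ 2 = (2 * y) ^ 2 by ring,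
        sqrt_sq (by positivity)]; ring]
    refine sqrt_le_sqrt ?_
    rw [div_le_div_iff₀ (by positivity) hx]
    have h2 : √2 ≤ 2 := sqrt_le_iff.2 (by norm_num)
    have : √2 ≤ 4 * y ^ 3 := by
      have h3 : √2 * y ≥ 1 := by
        have := sq_sqrt (show (0:ℝ) ≤ 2 by norm_num)
        by_contra! h
        have h4 : 0 ≤ √2 * y := by positivity
        nlinarith
      have : 4 * y ^ 3 = 2 * y * (2 * y ^ 2) := by ring
      have := sq_sqrt (show (0:ℝ) ≤ 2 by norm_num)
      nlinarith [sqrt_nonneg 2]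
    nlinarith
  have h1 := sin_sq_add_cos_sq θ
  rw [abs_mul]
  rcases le_total (1 / 2) (cos θ ^ 2) with h | h
  · have := key |sin θ| |cos θ| (abs_nonneg _) (by rw [sq_abs]; linarith) (abs_nonneg _)
    have : 0 ≤ 2 * (|sin θ| * (1 / √|cos θ|)) := by positivity
    linarith
  · have := key |cos θ| |sin θ| (abs_nonneg _) (by rw [sq_abs]; linarith) (abs_nonneg _)
    rw [mul_comm |sin θ|]
    have : 0 ≤ 2 * (|cos θ| * (1 / √|sin θ|)) := by positivity
    linarith

open Real in
theorem lintegral_poisson_le {η : ℝ} (hη : 0 ≤ η) :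
    ∫⁻ x, ENNReal.ofReal (η / (η ^ 2 + x ^ 2)) ≤ ENNReal.ofReal π := by
  rcases hη.eq_or_lt with rfl | hη
  · simp
  lift η to NNReal using hη.le
  have h := ProbabilityTheory.lintegral_cauchyPDF_eq_one 0 (γ := η) (by exact_mod_cast hη.ne')
  rw [← mul_one (ENNReal.ofReal π), ← h, ← lintegral_const_mul _ (by fun_prop)]
  refine lintegral_mono fun x ↦ ?_
  simp only [ProbabilityTheory.cauchyPDF, ProbabilityTheory.cauchyPDFReal]
  rw [← ENNReal.ofReal_mul pi_pos.le]
  refine ENNReal.ofReal_le_ofReal (le_of_eq ?_)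
  simp
  field_simp
  ring

open Real in
theorem lintegral_poisson_cos_le {η : ℝ} (hη : 0 ≤ η) :
    ∫⁻ θ in Set.Ioo (-π) π, ENNReal.ofReal (η / (η ^ 2 + cos θ ^ 2)) ≤ ENNReal.ofReal (6 * π) := by
  set F : ℝ → ℝ≥0∞ := fun x ↦ ENNReal.ofReal (η / (η ^ 2 + x ^ 2))
  have hc := lintegral_comp_cos_le 0 1 F
  simp only [one_mul, zero_add] at hc
  calc _ ≤ ∫⁻ θ in Set.Ioo (-π) π, (1 + 2 * (ENNReal.ofReal |sin θ| * F (cos θ))) := by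
        refine lintegral_mono fun θ ↦ ?_
        have e2 : (2 : ℝ≥0∞) = ENNReal.ofReal 2 := by simp
        rw [e2, ← ENNReal.ofReal_one, ← ENNReal.ofReal_mul (by positivity),
          ← ENNReal.ofReal_mul (by positivity),
          ← ENNReal.ofReal_add (by positivity) (by positivity)]
        refine ENNReal.ofReal_le_ofReal ?_
        have h0 : 0 ≤ η / (η ^ 2 + cos θ ^ 2) := by positivity
        rcases le_total (1 / 2) |sin θ| with h | h
        · nlinarith
        · have : sin θ ^ 2 ≤ 1 / 4 := by
            rw [← sq_abs]; nlinarith [abs_nonneg (sin θ)]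
          have h1 := sin_sq_add_cos_sq θ
          have : η / (η ^ 2 + cos θ ^ 2) ≤ 1 := by
            rw [div_le_one (by nlinarith [sq_nonneg η])]
            nlinarith [sq_nonneg (η - 1 / 2)]
          have : 0 ≤ 2 * (|sin θ| * (η / (η ^ 2 + cos θ ^ 2))) := by positivity
          linarith
    _ = ENNReal.ofReal (2 * π) +
        2 * ∫⁻ θ in Set.Ioo (-π) π, ENNReal.ofReal |sin θ| * F (cos θ) := by
        rw [lintegral_add_left measurable_const, lintegral_const_mul _ (by fun_prop)]
        rw [setLIntegral_const, one_mul, Real.volume_Ioo, sub_neg_eq_add, two_mul π]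
    _ ≤ ENNReal.ofReal (2 * π) + 2 * (2 * ENNReal.ofReal π) := by
        grw [hc, lintegral_poisson_le hη]
    _ = _ := by
        have e2 : (2 : ℝ≥0∞) = ENNReal.ofReal 2 := by simp
        rw [e2, ← ENNReal.ofReal_mul (by positivity), ← ENNReal.ofReal_mul (by positivity),
          ← ENNReal.ofReal_add (by positivity) (by positivity)]
        ring_nf

theorem orthonormal_euclideanSpace_three {a b c : EuclideanSpace ℝ (Fin 3)}
    (haa : a 0 ^ 2 + a 1 ^ 2 + a 2 ^ 2 = 1) (hbb : b 0 ^ 2 + b 1 ^ 2 + b 2 ^ 2 = 1)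
    (hcc : c 0 ^ 2 + c 1 ^ 2 + c 2 ^ 2 = 1) (hab : a 0 * b 0 + a 1 * b 1 + a 2 * b 2 = 0)
    (hac : a 0 * c 0 + a 1 * c 1 + a 2 * c 2 = 0) (hbc : b 0 * c 0 + b 1 * c 1 + b 2 * c 2 = 0) :
    Orthonormal ℝ ![a, b, c] := by
  rw [orthonormal_iff_ite]
  intro i j
  fin_cases i <;> fin_cases j <;>
    simp [PiLp.inner_apply, Fin.sum_univ_three, EuclideanSpace.norm_eq, *] <;> linarith

/-- The standard basis, starting with the last vector. -/
noncomputable def axisFrame : Fin 3 → EuclideanSpace ℝ (Fin 3) :=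
  ![!₂[0, 0, 1], !₂[1, 0, 0], !₂[0, 1, 0]]

/-- An orthonormal frame in the directions `(-1, 0, 1)`, `(1, 1, 1)`, `(1, -2, 1)`. -/
noncomputable def diagFrame₀ : Fin 3 → EuclideanSpace ℝ (Fin 3) :=
  ![!₂[-(√2 / 2), 0, √2 / 2], !₂[√3 / 3, √3 / 3, √3 / 3],
    !₂[√2 * √3 / 6, -(√2 * √3 / 3), √2 * √3 / 6]]

/-- An orthonormal frame in the directions `(0, -1, 1)`, `(1, 1, 1)`, `(-2, 1, 1)`. -/
noncomputable def diagFrame₁ : Fin 3 → EuclideanSpace ℝ (Fin 3) :=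
  ![!₂[0, -(√2 / 2), √2 / 2], !₂[√3 / 3, √3 / 3, √3 / 3],
    !₂[-(√2 * √3 / 3), √2 * √3 / 6, √2 * √3 / 6]]

theorem orthonormal_axisFrame : Orthonormal ℝ axisFrame :=
  orthonormal_euclideanSpace_three (by simp) (by simp) (by simp) (by simp) (by simp) (by simp)

theorem orthonormal_diagFrame₀ : Orthonormal ℝ diagFrame₀ := by
  have h2 := Real.sq_sqrt (show (0 : ℝ) ≤ 2 by norm_num)
  have h3 := Real.sq_sqrt (show (0 : ℝ) ≤ 3 by norm_num)
  apply orthonormal_euclideanSpace_three <;> simp [div_pow, mul_pow] <;> ring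

theorem orthonormal_diagFrame₁ : Orthonormal ℝ diagFrame₁ := by
  have h2 := Real.sq_sqrt (show (0 : ℝ) ≤ 2 by norm_num)
  have h3 := Real.sq_sqrt (show (0 : ℝ) ≤ 3 by norm_num)
  apply orthonormal_euclideanSpace_three <;> simp [div_pow, mul_pow] <;> ring

open Real in
theorem lintegral_mul_mul_abs_sum_le : ∃ C : ℝ≥0∞, C ≠ ∞ ∧ ∀ F G : ℝ → ℝ≥0∞,
    Measurable F → Measurable G →
    ∫⁻ σ, F (σ 2 - σ 0) * (G (σ 2 - σ 1) * ENNReal.ofReal |σ 0 + σ 1 + σ 2|) ∂normSphere 3 ≤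
      C * ((∫⁻ x, F x) * ∫⁻ x, G x) := by
  obtain ⟨K, hK, h⟩ := lintegral_normSphere_three
  refine ⟨K * 6, by finiteness, fun F G hF hG ↦ ?_⟩
  rw [h _ orthonormal_diagFrame₀ _ (by fun_prop), mul_assoc]
  gcongr
  have key (t : ℝ) : ∫⁻ θ in Set.Ioo (-π) π, G (√2 / 2 * t + √2 * √3 / 2 * √(1 - t ^ 2) * sin θ) *
      ENNReal.ofReal |√3 * (√(1 - t ^ 2) * cos θ)| ≤ 6 * ∫⁻ x, G x := by
    have := lintegral_comp_sin_le (√2 / 2 * t) (√2 * √3 / 2 * √(1 - t ^ 2)) G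
    rw [show (6 : ℝ≥0∞) = 2 * 3 by norm_num, mul_assoc]
    grw [← this, ← lintegral_const_mul _ (by fun_prop)]
    refine lintegral_mono fun θ ↦ ?_
    rw [mul_comm (G _), ← mul_assoc (2 : ℝ≥0∞)]
    refine mul_le_mul' ?_ le_rfl
    rw [show (2 : ℝ≥0∞) = ENNReal.ofReal 2 by simp, ← ENNReal.ofReal_mul (by positivity)]
    refine ENNReal.ofReal_le_ofReal ?_
    have h2 : 1 ≤ √2 := by rw [one_le_sqrt]; norm_num
    rw [mul_assoc (√2 * √3 / 2), abs_mul √3, abs_mul (√2 * √3 / 2), ← mul_assoc (2 : ℝ),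
      abs_of_nonneg (sqrt_nonneg 3), abs_of_nonneg (show 0 ≤ √2 * √3 / 2 by positivity)]
    refine mul_le_mul_of_nonneg_right ?_ (abs_nonneg _)
    nlinarith [sqrt_nonneg 3]
  calc _ = ∫⁻ t in Set.Ioo (-1 : ℝ) 1, F (√2 * t) * ∫⁻ θ in Set.Ioo (-π) π,
        G (√2 / 2 * t + √2 * √3 / 2 * √(1 - t ^ 2) * sin θ) *
          ENNReal.ofReal |√3 * (√(1 - t ^ 2) * cos θ)| := by
        refine lintegral_congr fun t ↦ ?_
        rw [← lintegral_const_mul _ (by fun_prop)]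
        refine lintegral_congr fun θ ↦ ?_
        set ρ := √(1 - t ^ 2)
        set w := t • diagFrame₀ 0 + (ρ * cos θ) • diagFrame₀ 1 + (ρ * sin θ) • diagFrame₀ 2 with hw
        have e1 : w 2 - w 0 = √2 * t := by simp [hw, diagFrame₀]; ring
        have e2 : w 2 - w 1 = √2 / 2 * t + √2 * √3 / 2 * ρ * sin θ := by
          simp [hw, diagFrame₀]; ring
        have e3 : w 0 + w 1 + w 2 = √3 * (ρ * cos θ) := by simp [hw, diagFrame₀]; ring
        rw [e1, e2, e3]
    _ ≤ ∫⁻ t in Set.Ioo (-1 : ℝ) 1, F (√2 * t) * (6 * ∫⁻ x, G x) :=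
        lintegral_mono fun t ↦ mul_le_mul_right (key t) _
    _ ≤ _ := by
        rw [lintegral_mul_const _ (by fun_prop)]
        grw [lintegral_comp_mul_left_le (by rw [one_le_sqrt]; norm_num) _ measurableSet_Ioo]
        exact le_of_eq (by ring)

open Real in
theorem lintegral_mul_sqrt_le : ∃ C : ℝ≥0∞, C ≠ ∞ ∧ ∀ F : ℝ → ℝ≥0∞, Measurable F →
    ∫⁻ σ, F (σ 2 - σ 0) * ENNReal.ofReal √(((σ 0 - 2 * σ 1 + σ 2) ^ 2 +
      2 * (σ 0 + σ 1 + σ 2) ^ 2) / (|σ 0 - 2 * σ 1 + σ 2| * |σ 0 + σ 1 + σ 2|)) ∂normSphere 3 ≤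
      C * ∫⁻ x, F x := by
  obtain ⟨K, hK, h⟩ := lintegral_normSphere_three
  have hX := lintegral_inv_sqrt_abs_sin_mul_cos_ne_top
  refine ⟨K * ∫⁻ θ in Set.Ioo (-π) π, ENNReal.ofReal √(√2 / |sin θ * cos θ|), by finiteness,
    fun F hF ↦ ?_⟩
  rw [h _ orthonormal_diagFrame₀ _ (by fun_prop), mul_assoc]
  gcongr
  rw [mul_comm]
  grw [← lintegral_comp_mul_left_le (c := √2) (by rw [one_le_sqrt]; norm_num) _ measurableSet_Ioo F]
  rw [← lintegral_mul_const _ (by fun_prop)]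
  refine (setLIntegral_congr_fun measurableSet_Ioo fun t ht ↦ ?_).le
  simp only
  rw [← lintegral_const_mul _ (by fun_prop)]
  refine lintegral_congr fun θ ↦ ?_
  have h2 := sq_sqrt (show (0 : ℝ) ≤ 2 by norm_num)
  have h3 := sq_sqrt (show (0 : ℝ) ≤ 3 by norm_num)
  have hρ : 0 < √(1 - t ^ 2) := sqrt_pos.2 (by nlinarith [ht.1, ht.2])
  set ρ := √(1 - t ^ 2)
  set w := t • diagFrame₀ 0 + (ρ * cos θ) • diagFrame₀ 1 + (ρ * sin θ) • diagFrame₀ 2 with hw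
  have e1 : w 2 - w 0 = √2 * t := by simp [hw, diagFrame₀]; ring
  have e2 : w 0 - 2 * w 1 + w 2 = √2 * √3 * ρ * sin θ := by simp [hw, diagFrame₀]; ring
  have e3 : w 0 + w 1 + w 2 = √3 * ρ * cos θ := by simp [hw, diagFrame₀]; ring
  rw [e1, e2, e3]
  congr 3
  have e4 : (√2 * √3 * ρ * sin θ) ^ 2 + 2 * (√3 * ρ * cos θ) ^ 2 = 6 * ρ ^ 2 := by
    simp only [mul_pow, h2, h3]
    linear_combination 6 * ρ ^ 2 * sin_sq_add_cos_sq θ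
  have e5 : |√2 * √3 * ρ * sin θ| * |√3 * ρ * cos θ| = 3 * √2 * ρ ^ 2 * |sin θ * cos θ| := by
    simp only [abs_mul, abs_of_nonneg hρ.le, abs_of_nonneg (sqrt_nonneg 2),
      abs_of_nonneg (sqrt_nonneg 3)]
    linear_combination √2 * ρ ^ 2 * |sin θ| * |cos θ| * h3
  rw [e4, e5]
  rcases eq_or_ne (sin θ * cos θ) 0 with h0 | h0
  · simp [h0]
  · have := abs_pos.2 h0
    field_simp
    linarith

open Real in
theorem lintegral_mul_mul_abs_le : ∃ C : ℝ≥0∞, C ≠ ∞ ∧ ∀ F G : ℝ → ℝ≥0∞,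
    Measurable F → Measurable G →
    ∫⁻ σ, F (σ 2 - σ 1) * (G (σ 2) * ENNReal.ofReal |σ 0|) ∂normSphere 3 ≤
      C * ((∫⁻ x, F x) * ∫⁻ x, G x) := by
  obtain ⟨K, hK, h⟩ := lintegral_normSphere_three
  refine ⟨K * 3, by finiteness, fun F G hF hG ↦ ?_⟩
  rw [h _ orthonormal_axisFrame _ (by fun_prop)]
  refine le_trans ?_ (show K * ((∫⁻ x, G x) * (3 * ∫⁻ x, F x)) = _ by ring).le
  gcongr
  grw [← setLIntegral_le_lintegral (Set.Ioo (-1 : ℝ) 1) G]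
  rw [← lintegral_mul_const _ hG]
  refine lintegral_mono fun t ↦ ?_
  grw [← lintegral_comp_sin_le t (-√(1 - t ^ 2)) F]
  rw [← lintegral_const_mul _ (by fun_prop)]
  refine (lintegral_congr fun θ ↦ ?_).le
  simp [axisFrame]
  ring_nf

open Real in
theorem lintegral_apply_two_le : ∃ C : ℝ≥0∞, C ≠ ∞ ∧ ∀ G : ℝ → ℝ≥0∞, Measurable G →
    ∫⁻ σ, G (σ 2) ∂normSphere 3 ≤ C * ∫⁻ x, G x := by
  obtain ⟨K, hK, h⟩ := lintegral_normSphere_three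
  refine ⟨K * ENNReal.ofReal (2 * π), by finiteness, fun G hG ↦ ?_⟩
  rw [h _ orthonormal_axisFrame _ (by fun_prop), mul_assoc, mul_comm (ENNReal.ofReal _)]
  gcongr
  grw [← setLIntegral_le_lintegral (Set.Ioo (-1 : ℝ) 1) G]
  rw [← lintegral_mul_const _ hG]
  refine (lintegral_congr fun t ↦ ?_).le
  simp [axisFrame, two_mul]

instance isFiniteMeasure_normSphere_three : IsFiniteMeasure (normSphere 3) := by
  obtain ⟨K, hK, h⟩ := lintegral_normSphere_three
  refine ⟨?_⟩
  have := h _ orthonormal_axisFrame 1 measurable_one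
  simp at this
  rw [this]
  finiteness

open Real in
theorem abs_div_sq_add_sq_le {t : ℝ} (ht : t ^ 2 ≤ 1) (θ : ℝ) :
    |√3 / 2 * t - √(1 - t ^ 2) * sin θ / 2| / ((√3 / 2 * t - √(1 - t ^ 2) * sin θ / 2) ^ 2 +
      (√(1 - t ^ 2) * cos θ) ^ 2) ≤ 2 +
      6 * (|√3 / 2 * t - √(1 - t ^ 2) / 2| /
        (|√3 / 2 * t - √(1 - t ^ 2) / 2| ^ 2 + cos θ ^ 2)) +
      6 * (|√3 / 2 * t + √(1 - t ^ 2) / 2| /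
        (|√3 / 2 * t + √(1 - t ^ 2) / 2| ^ 2 + cos θ ^ 2)) := by
  have h3 := sq_sqrt (show (0 : ℝ) ≤ 3 by norm_num)
  have hρ2 := sq_sqrt (show 0 ≤ 1 - t ^ 2 by linarith)
  have hρ := sqrt_nonneg (1 - t ^ 2)
  set ρ := √(1 - t ^ 2)
  have hsc := sin_sq_add_cos_sq θ
  have hs := abs_sin_le_one θ
  set A := √3 / 2 * t
  have hA : A ^ 2 = 3 / 4 * t ^ 2 := by simp only [A]; nlinarith
  have key (y y' : ℝ) (hd : |y - y'| ≤ cos θ ^ 2 / 2) (h : 1 / 2 ≤ ρ) :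
      |y| / (y ^ 2 + (ρ * cos θ) ^ 2) ≤ 2 + 6 * (|y'| / (|y'| ^ 2 + cos θ ^ 2)) := by
    have hc : cos θ ^ 2 ≤ 1 := by nlinarith
    have hm : cos θ ^ 2 / 4 ≤ (ρ * cos θ) ^ 2 := by
      rw [mul_pow]
      have : 1 / 4 ≤ ρ ^ 2 := by nlinarith
      nlinarith [mul_nonneg (sq_nonneg (cos θ)) (sub_nonneg.2 this)]
    have hr : 0 ≤ 6 * (|y'| / (|y'| ^ 2 + cos θ ^ 2)) := by positivity
    have hy : |y| ≤ |y'| + cos θ ^ 2 / 2 := by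
      have := abs_sub_abs_le_abs_sub y y'; linarith
    have hq : |y'| ^ 2 + cos θ ^ 2 ≤ 6 * (y ^ 2 + (ρ * cos θ) ^ 2) := by
      rw [sq_abs]
      have hd2 : (y - y') ^ 2 ≤ cos θ ^ 2 / 4 := by
        rw [← sq_abs]
        nlinarith [abs_nonneg (y - y'), sq_nonneg (cos θ)]
      nlinarith [sq_nonneg (y + (y - y'))]
    rcases (add_nonneg (sq_nonneg |y'|) (sq_nonneg (cos θ))).eq_or_lt with h0 | h0
    · have : cos θ ^ 2 = 0 := by nlinarith [sq_nonneg |y'|, sq_nonneg (cos θ)]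
      have : |y'| = 0 := by
        have : |y'| ^ 2 = 0 := by nlinarith
        simpa using this
      have : |y| = 0 := le_antisymm (by linarith) (abs_nonneg _)
      rw [this, zero_div]
      linarith
    · have hD : 0 < y ^ 2 + (ρ * cos θ) ^ 2 := by linarith
      have h1 : |y'| / (6 * (y ^ 2 + (ρ * cos θ) ^ 2)) ≤ |y'| / (|y'| ^ 2 + cos θ ^ 2) := by
        gcongr
      rw [div_le_iff₀ (by positivity)] at h1
      rw [div_le_iff₀ hD]
      nlinarith [sq_nonneg y]
  have p1 : 0 ≤ 6 * (|A - ρ / 2| / (|A - ρ / 2| ^ 2 + cos θ ^ 2)) := by positivity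
  have p2 : 0 ≤ 6 * (|A + ρ / 2| / (|A + ρ / 2| ^ 2 + cos θ ^ 2)) := by positivity
  have hρ1 : ρ ≤ 1 := by nlinarith [sq_nonneg t]
  rcases le_total (1 / 2) ρ with h | h
  · rcases le_total 0 (sin θ) with h' | h'
    · rw [abs_of_nonneg h'] at hs
      have := key (A - ρ * sin θ / 2) (A - ρ / 2) (by
        rw [abs_of_nonneg (by nlinarith)]; nlinarith [mul_nonneg h' (sub_nonneg.2 hs)]) h
      linarith
    · rw [abs_of_nonpos h'] at hs
      have := key (A - ρ * sin θ / 2) (A + ρ / 2) (by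
        rw [abs_of_nonpos (by nlinarith)]
        nlinarith [mul_nonneg (neg_nonneg.2 h') (sub_nonneg.2 hs)]) h
      linarith
  · have hA' : 3 / 4 ≤ |A| := by
      have : ρ ^ 2 ≤ 1 / 4 := by nlinarith
      rw [← abs_of_pos (show (0 : ℝ) < 3 / 4 by norm_num), ← sq_le_sq]
      linarith
    have hB : |ρ * sin θ / 2| ≤ 1 / 4 := by
      rw [abs_div, abs_mul, abs_of_nonneg hρ, abs_two]
      have := mul_le_mul h hs (abs_nonneg _) (by norm_num)
      linarith
    have hy : 1 / 2 ≤ |A - ρ * sin θ / 2| := by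
      have := abs_sub_abs_le_abs_sub A (ρ * sin θ / 2); linarith
    have : |A - ρ * sin θ / 2| / ((A - ρ * sin θ / 2) ^ 2 + (ρ * cos θ) ^ 2) ≤ 2 := by
      rw [← sq_abs (A - _), div_le_iff₀ (by positivity)]
      have := mul_le_mul_of_nonneg_right hy (abs_nonneg (A - ρ * sin θ / 2))
      linarith [sq_nonneg (ρ * cos θ)]
    linarith

open Real in
theorem lintegral_mul_abs_div_le : ∃ C : ℝ≥0∞, C ≠ ∞ ∧ ∀ F : ℝ → ℝ≥0∞, Measurable F →
    ∫⁻ σ, F (σ 2 - σ 1) * ENNReal.ofReal (|σ 0 - 2 * σ 1 + σ 2| / ((σ 0 - 2 * σ 1 + σ 2) ^ 2 +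
      2 * (σ 0 + σ 1 + σ 2) ^ 2)) ∂normSphere 3 ≤ C * ∫⁻ x, F x := by
  obtain ⟨K, hK, h⟩ := lintegral_normSphere_three
  set M : ℝ≥0∞ := 2 * ENNReal.ofReal (2 * π) + 6 * ENNReal.ofReal (6 * π) +
    6 * ENNReal.ofReal (6 * π)
  refine ⟨K * M, by finiteness, fun F hF ↦ ?_⟩
  rw [h _ orthonormal_diagFrame₁ _ (by fun_prop), mul_assoc]
  gcongr
  rw [mul_comm]
  grw [← lintegral_comp_mul_left_le (c := √2) (by rw [one_le_sqrt]; norm_num) _ measurableSet_Ioo F]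
  rw [← lintegral_mul_const _ (by fun_prop)]
  refine setLIntegral_mono (by fun_prop) fun t ht ↦ ?_
  have ht' : t ^ 2 ≤ 1 := by nlinarith [ht.1, ht.2]
  set P : ℝ → ℝ → ℝ≥0∞ := fun η θ ↦ ENNReal.ofReal (|η| / (|η| ^ 2 + cos θ ^ 2))
  have hP (η : ℝ) : ∫⁻ θ in Set.Ioo (-π) π, P η θ ≤ ENNReal.ofReal (6 * π) :=
    lintegral_poisson_cos_le (abs_nonneg η)
  have hPm (η : ℝ) : Measurable (P η) := by fun_prop
  calc _ ≤ ∫⁻ θ in Set.Ioo (-π) π, F (√2 * t) * (2 + 6 * P (√3 / 2 * t - √(1 - t ^ 2) / 2) θ +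
        6 * P (√3 / 2 * t + √(1 - t ^ 2) / 2) θ) := by
        refine lintegral_mono fun θ ↦ ?_
        have hle := abs_div_sq_add_sq_le ht' θ
        set ρ := √(1 - t ^ 2)
        set w := t • diagFrame₁ 0 + (ρ * cos θ) • diagFrame₁ 1 + (ρ * sin θ) • diagFrame₁ 2 with hw
        have h2 := sq_sqrt (show (0 : ℝ) ≤ 2 by norm_num)
        have h3 := sq_sqrt (show (0 : ℝ) ≤ 3 by norm_num)
        have e1 : w 2 - w 1 = √2 * t := by simp [hw, diagFrame₁]; ring
        have e2 : w 0 - 2 * w 1 + w 2 = √2 * √3 * (√3 / 2 * t - ρ * sin θ / 2) := by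
          simp [hw, diagFrame₁]
          linear_combination -(√2 * t / 2) * h3
        have e3 : w 0 + w 1 + w 2 = √3 * (ρ * cos θ) := by simp [hw, diagFrame₁]; ring
        rw [e1, e2, e3]
        refine mul_le_mul' le_rfl ?_
        simp only [P]
        rw [show (2 : ℝ≥0∞) = ENNReal.ofReal 2 by simp, show (6 : ℝ≥0∞) = ENNReal.ofReal 6 by simp,
          ← ENNReal.ofReal_mul (by positivity), ← ENNReal.ofReal_mul (by positivity),
          ← ENNReal.ofReal_add (by positivity) (by positivity),
          ← ENNReal.ofReal_add (by positivity) (by positivity)]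
        refine ENNReal.ofReal_le_ofReal (le_trans ?_ hle)
        set y := √3 / 2 * t - ρ * sin θ / 2
        set z := ρ * cos θ
        rw [show (√2 * √3 * y) ^ 2 + 2 * (√3 * z) ^ 2 = √2 * √3 * (√2 * √3 * (y ^ 2 + z ^ 2)) by
          linear_combination -(√3 ^ 2 * z ^ 2) * h2, abs_mul, abs_of_nonneg (by positivity),
          mul_div_mul_left _ _ (by positivity)]
        rcases (add_nonneg (sq_nonneg y) (sq_nonneg z)).eq_or_lt with h0 | h0
        · simp [← h0]
        gcongr
        have : 1 ≤ √2 := by rw [one_le_sqrt]; norm_num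
        have : 1 ≤ √3 := by rw [one_le_sqrt]; norm_num
        exact le_mul_of_one_le_left h0.le (by nlinarith)
    _ = F (√2 * t) * (2 * ENNReal.ofReal (2 * π) +
        6 * (∫⁻ θ in Set.Ioo (-π) π, P (√3 / 2 * t - √(1 - t ^ 2) / 2) θ) +
        6 * ∫⁻ θ in Set.Ioo (-π) π, P (√3 / 2 * t + √(1 - t ^ 2) / 2) θ) := by
        rw [lintegral_const_mul _ (by fun_prop), lintegral_add_left (by fun_prop),
          lintegral_add_left (by fun_prop), lintegral_const_mul _ (hPm _),
          lintegral_const_mul _ (hPm _), setLIntegral_const, Real.volume_Ioo, sub_neg_eq_add,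
          two_mul π]
    _ ≤ _ := by
        simp only [M]
        gcongr
        exacts [hP _, hP _]

theorem ae_normSphere_three {p : EuclideanSpace ℝ (Fin 3) → Prop} (hp : MeasurableSet {σ | p σ})
    {v : Fin 3 → EuclideanSpace ℝ (Fin 3)} (hv : Orthonormal ℝ v)
    (h : ∀ t ∈ Set.Ioo (-1 : ℝ) 1, ∀ᵐ θ, p (t • v 0 + (√(1 - t ^ 2) * Real.cos θ) • v 1 +
      (√(1 - t ^ 2) * Real.sin θ) • v 2)) : ∀ᵐ σ ∂normSphere 3, p σ := by
  obtain ⟨K, -, hK⟩ := lintegral_normSphere_three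
  have h1 := hK v hv _ (measurable_one.indicator hp.compl)
  rw [lintegral_indicator_one hp.compl, setLIntegral_congr_fun (g := 0) measurableSet_Ioo] at h1
  · simpa [ae_iff, Set.compl_def] using h1
  · intro t ht
    refine (lintegral_congr_ae (ae_restrict_of_ae ((h t ht).mono fun θ hθ ↦ ?_))).trans
      lintegral_zero
    simp [hθ]

theorem ae_norm_eq_one : ∀ᵐ σ ∂normSphere 3, σ 0 ^ 2 + σ 1 ^ 2 + σ 2 ^ 2 = 1 := by
  refine ae_normSphere_three (measurableSet_eq_fun (by fun_prop) (by fun_prop))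
    orthonormal_axisFrame fun t ht ↦ Filter.Eventually.of_forall fun θ ↦ ?_
  simp [axisFrame, mul_pow]
  rw [Real.sq_sqrt (by nlinarith [ht.1, ht.2])]
  linear_combination (1 - t ^ 2) * Real.sin_sq_add_cos_sq θ

theorem ae_sin_mul_cos_ne_zero : ∀ᵐ θ : ℝ, Real.sin θ * Real.cos θ ≠ 0 := by
  refine ((Set.countable_range fun n : ℤ ↦ n * Real.pi / 2).ae_notMem volume).mono
    fun θ hθ h ↦ hθ ?_
  obtain ⟨n, hn⟩ := Real.sin_eq_zero_iff.1 (show Real.sin (2 * θ) = 0 by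
    rw [Real.sin_two_mul]; linarith)
  exact ⟨n, by simp only [hn]; ring⟩

theorem ae_diag_ne_zero :
    ∀ᵐ σ ∂normSphere 3, (σ 0 - 2 * σ 1 + σ 2) * (σ 0 + σ 1 + σ 2) ≠ 0 := by
  refine ae_normSphere_three (measurableSet_eq_fun (by fun_prop) (by fun_prop)).compl
    orthonormal_diagFrame₀ fun t ht ↦ ae_sin_mul_cos_ne_zero.mono fun θ hθ ↦ ?_
  have hρ : 0 < √(1 - t ^ 2) := Real.sqrt_pos.2 (by nlinarith [ht.1, ht.2])
  have h3 := Real.sq_sqrt (show (0 : ℝ) ≤ 3 by norm_num)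
  convert mul_ne_zero (show 3 * √2 * √(1 - t ^ 2) ^ 2 ≠ 0 by positivity) hθ using 1
  simp [diagFrame₀]
  linear_combination √2 * √(1 - t ^ 2) ^ 2 * Real.sin θ * Real.cos θ * h3

theorem lintegral_normSphere_swap {h : EuclideanSpace ℝ (Fin 3) → ℝ≥0∞} (hh : Measurable h) :
    ∫⁻ σ, h σ ∂normSphere 3 =
      ∫⁻ σ, h ((LinearIsometryEquiv.piLpCongrLeft 2 ℝ ℝ (Equiv.swap (0 : Fin 3) 1)) σ)
        ∂normSphere 3 := by
  obtain ⟨K, -, hK⟩ := lintegral_normSphere_three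
  set e := LinearIsometryEquiv.piLpCongrLeft 2 ℝ ℝ (Equiv.swap (0 : Fin 3) 1)
  rw [hK _ orthonormal_axisFrame (fun σ ↦ h (e σ)) (hh.comp e.continuous.measurable),
    hK _ (orthonormal_axisFrame.comp_linearIsometryEquiv e) h hh]
  simp

theorem holder_factorization (A B g z X w Y : ℝ≥0∞) (h : z * X ^ 2 * Y = 1) :
    w ^ (1 / 5 : ℝ) * (g ^ (1 / 5 : ℝ) * A ^ (3 / 5 : ℝ) * B ^ (3 / 5 : ℝ)) =
      (A * (B * z)) ^ (1 / 5 : ℝ) * (A * X) ^ (2 / 5 : ℝ) * (B * (g * w)) ^ (1 / 5 : ℝ) *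
        (B * Y) ^ (1 / 5 : ℝ) := by
  have h2 (x : ℝ≥0∞) : x ^ (2 / 5 : ℝ) = (x ^ (1 / 5 : ℝ)) ^ 2 := by
    rw [← ENNReal.rpow_natCast, ← ENNReal.rpow_mul]; norm_num
  have h3 (x : ℝ≥0∞) : x ^ (3 / 5 : ℝ) = (x ^ (1 / 5 : ℝ)) ^ 3 := by
    rw [← ENNReal.rpow_natCast, ← ENNReal.rpow_mul]; norm_num
  have h' : z ^ (1 / 5 : ℝ) * (X ^ (1 / 5 : ℝ)) ^ 2 * Y ^ (1 / 5 : ℝ) = 1 := by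
    rw [← h2, ← ENNReal.one_rpow (1 / 5), ← h, ENNReal.mul_rpow_of_nonneg _ _ (by norm_num),
      ENNReal.mul_rpow_of_nonneg _ _ (by norm_num), ← ENNReal.rpow_natCast, ← ENNReal.rpow_mul]
    norm_num
  simp only [h2, h3, ENNReal.mul_rpow_of_nonneg _ _ (show (0 : ℝ) ≤ 1 / 5 by norm_num)]
  set a := A ^ (1 / 5 : ℝ)
  set b := B ^ (1 / 5 : ℝ)
  calc _ = w ^ (1 / 5 : ℝ) * (g ^ (1 / 5 : ℝ) * a ^ 3 * b ^ 3) *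
        (z ^ (1 / 5 : ℝ) * (X ^ (1 / 5 : ℝ)) ^ 2 * Y ^ (1 / 5 : ℝ)) := by rw [h', mul_one]
    _ = _ := by ring

theorem ofReal_abs_mul_sqrt_sq_mul_eq_one {y z : ℝ} (hy : y ≠ 0) (hz : z ≠ 0) :
    ENNReal.ofReal |z| * ENNReal.ofReal √((y ^ 2 + 2 * z ^ 2) / (|y| * |z|)) ^ 2 *
      ENNReal.ofReal (|y| / (y ^ 2 + 2 * z ^ 2)) = 1 := by
  have := abs_pos.2 hy
  have := abs_pos.2 hz
  rw [← ENNReal.ofReal_pow (by positivity), Real.sq_sqrt (by positivity),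
    ← ENNReal.ofReal_mul (by positivity), ← ENNReal.ofReal_mul (by positivity),
    ← ENNReal.ofReal_one]
  congr 1
  field_simp

/-- The integrand of the trilinear form on the sphere. -/
noncomputable def sphereIntegrand (A B G : ℝ → ℝ≥0∞) (σ : EuclideanSpace ℝ (Fin 3)) : ℝ≥0∞ :=
  G (σ 2) ^ (1 / 5 : ℝ) * A (σ 2 - σ 0) ^ (3 / 5 : ℝ) * B (σ 2 - σ 1) ^ (3 / 5 : ℝ)

theorem lintegral_abs_zero_mul_sphereIntegrand_le : ∃ C : ℝ≥0∞, C ≠ ∞ ∧ ∀ A B G : ℝ → ℝ≥0∞,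
    Measurable A → Measurable B → Measurable G →
    ∫⁻ σ, ENNReal.ofReal |σ 0| ^ (1 / 5 : ℝ) * sphereIntegrand A B G σ ∂normSphere 3 ≤
      C * ((∫⁻ x, G x) ^ (1 / 5 : ℝ) * (∫⁻ x, A x) ^ (3 / 5 : ℝ) * (∫⁻ x, B x) ^ (3 / 5 : ℝ)) := by
  obtain ⟨C₁, hC₁, h₁⟩ := lintegral_mul_mul_abs_sum_le
  obtain ⟨C₂, hC₂, h₂⟩ := lintegral_mul_sqrt_le
  obtain ⟨C₃, hC₃, h₃⟩ := lintegral_mul_mul_abs_le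
  obtain ⟨C₄, hC₄, h₄⟩ := lintegral_mul_abs_div_le
  refine ⟨C₁ ^ (1 / 5 : ℝ) * C₂ ^ (2 / 5 : ℝ) * C₃ ^ (1 / 5 : ℝ) * C₄ ^ (1 / 5 : ℝ),
    by finiteness, fun A B G hA hB hG ↦ ?_⟩
  set f : Fin 4 → EuclideanSpace ℝ (Fin 3) → ℝ≥0∞ := ![
    fun σ ↦ A (σ 2 - σ 0) * (B (σ 2 - σ 1) * ENNReal.ofReal |σ 0 + σ 1 + σ 2|),
    fun σ ↦ A (σ 2 - σ 0) * ENNReal.ofReal √(((σ 0 - 2 * σ 1 + σ 2) ^ 2 +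
      2 * (σ 0 + σ 1 + σ 2) ^ 2) / (|σ 0 - 2 * σ 1 + σ 2| * |σ 0 + σ 1 + σ 2|)),
    fun σ ↦ B (σ 2 - σ 1) * (G (σ 2) * ENNReal.ofReal |σ 0|),
    fun σ ↦ B (σ 2 - σ 1) * ENNReal.ofReal (|σ 0 - 2 * σ 1 + σ 2| /
      ((σ 0 - 2 * σ 1 + σ 2) ^ 2 + 2 * (σ 0 + σ 1 + σ 2) ^ 2))] with hf
  have hfm (i : Fin 4) : Measurable (f i) := by
    fin_cases i <;> simp [hf] <;> fun_prop
  have key := ENNReal.lintegral_prod_norm_pow_le (μ := normSphere 3) Finset.univ (f := f)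
    (fun i _ ↦ (hfm i).aemeasurable) (p := ![1 / 5, 2 / 5, 1 / 5, 1 / 5])
    (by simp [Fin.sum_univ_four]; norm_num) (fun i _ ↦ by fin_cases i <;> simp; norm_num)
  simp only [Fin.prod_univ_four, hf, Matrix.cons_val] at key
  calc _ = _ := lintegral_congr_ae ?_
    _ ≤ _ := key
    _ ≤ _ := mul_le_mul' (mul_le_mul' (mul_le_mul'
      (ENNReal.rpow_le_rpow (h₁ A B hA hB) (by norm_num))
      (ENNReal.rpow_le_rpow (h₂ A hA) (by norm_num)))
      (ENNReal.rpow_le_rpow (h₃ B G hB hG) (by norm_num)))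
      (ENNReal.rpow_le_rpow (h₄ B hB) (by norm_num))
    _ = _ := ?_
  · filter_upwards [ae_diag_ne_zero] with σ hσ
    exact holder_factorization _ _ _ _ _ _ _
      (ofReal_abs_mul_sqrt_sq_mul_eq_one (left_ne_zero_of_mul hσ) (right_ne_zero_of_mul hσ))
  · have := holder_factorization (∫⁻ x, A x) (∫⁻ x, B x) (∫⁻ x, G x) 1 1 1 1 (by simp)
    simp only [mul_one, ENNReal.one_rpow, one_mul] at this
    rw [this]
    simp only [ENNReal.mul_rpow_of_nonneg _ _ (show (0 : ℝ) ≤ 1 / 5 by norm_num),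
      ENNReal.mul_rpow_of_nonneg _ _ (show (0 : ℝ) ≤ 2 / 5 by norm_num)]
    ring

theorem measurable_sphereIntegrand {A B G : ℝ → ℝ≥0∞} (hA : Measurable A) (hB : Measurable B)
    (hG : Measurable G) : Measurable (sphereIntegrand A B G) := by
  unfold sphereIntegrand
  fun_prop

theorem lintegral_abs_one_mul_sphereIntegrand_le : ∃ C : ℝ≥0∞, C ≠ ∞ ∧ ∀ A B G : ℝ → ℝ≥0∞,
    Measurable A → Measurable B → Measurable G →
    ∫⁻ σ, ENNReal.ofReal |σ 1| ^ (1 / 5 : ℝ) * sphereIntegrand A B G σ ∂normSphere 3 ≤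
      C * ((∫⁻ x, G x) ^ (1 / 5 : ℝ) * (∫⁻ x, A x) ^ (3 / 5 : ℝ) * (∫⁻ x, B x) ^ (3 / 5 : ℝ)) := by
  obtain ⟨C, hC, h⟩ := lintegral_abs_zero_mul_sphereIntegrand_le
  refine ⟨C, hC, fun A B G hA hB hG ↦ ?_⟩
  have := measurable_sphereIntegrand hA hB hG
  rw [lintegral_normSphere_swap (by fun_prop)]
  convert h B A G hB hA hG using 2
  · ext σ
    simp [sphereIntegrand, Equiv.swap_apply_def]
    ring
  · ring

theorem lintegral_abs_sum_mul_sphereIntegrand_le : ∃ C : ℝ≥0∞, C ≠ ∞ ∧ ∀ A B G : ℝ → ℝ≥0∞,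
    Measurable A → Measurable B → Measurable G →
    ∫⁻ σ, ENNReal.ofReal |σ 0 + σ 1 + σ 2| ^ (3 / 5 : ℝ) * sphereIntegrand A B G σ
        ∂normSphere 3 ≤
      C * ((∫⁻ x, G x) ^ (1 / 5 : ℝ) * (∫⁻ x, A x) ^ (3 / 5 : ℝ) * (∫⁻ x, B x) ^ (3 / 5 : ℝ)) := by
  obtain ⟨C₁, hC₁, h₁⟩ := lintegral_mul_mul_abs_sum_le
  obtain ⟨C₂, hC₂, h₂⟩ := lintegral_apply_two_le
  refine ⟨C₁ ^ (3 / 5 : ℝ) * C₂ ^ (1 / 5 : ℝ) * normSphere 3 .univ ^ (1 / 5 : ℝ),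
    by finiteness, fun A B G hA hB hG ↦ ?_⟩
  set f : Fin 3 → EuclideanSpace ℝ (Fin 3) → ℝ≥0∞ := ![
    fun σ ↦ A (σ 2 - σ 0) * (B (σ 2 - σ 1) * ENNReal.ofReal |σ 0 + σ 1 + σ 2|),
    fun σ ↦ G (σ 2), fun σ ↦ 1] with hf
  have hfm (i : Fin 3) : Measurable (f i) := by
    fin_cases i <;> simp [hf] <;> fun_prop
  have key := ENNReal.lintegral_prod_norm_pow_le (μ := normSphere 3) Finset.univ (f := f)
    (fun i _ ↦ (hfm i).aemeasurable) (p := ![3 / 5, 1 / 5, 1 / 5])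
    (by simp [Fin.sum_univ_three]; norm_num) (fun i _ ↦ by fin_cases i <;> simp; norm_num)
  simp only [Fin.prod_univ_three, hf, Matrix.cons_val, lintegral_one] at key
  calc _ = _ := lintegral_congr fun σ ↦ ?_
    _ ≤ _ := key
    _ ≤ _ := mul_le_mul' (mul_le_mul' (ENNReal.rpow_le_rpow (h₁ A B hA hB) (by norm_num))
      (ENNReal.rpow_le_rpow (h₂ G hG) (by norm_num))) le_rfl
    _ = _ := ?_
  · simp only [sphereIntegrand, ENNReal.mul_rpow_of_nonneg _ _ (show (0 : ℝ) ≤ 3 / 5 by norm_num),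
      ENNReal.one_rpow]
    ring
  · simp only [ENNReal.mul_rpow_of_nonneg _ _ (show (0 : ℝ) ≤ 1 / 5 by norm_num),
      ENNReal.mul_rpow_of_nonneg _ _ (show (0 : ℝ) ≤ 3 / 5 by norm_num)]
    ring

theorem one_le_four_mul_rpow {x p : ℝ} (hx : 1 / 4 ≤ |x|) (hp : 0 ≤ p) (hp1 : p ≤ 1) :
    1 ≤ 4 * ENNReal.ofReal |x| ^ p := by
  rw [ENNReal.ofReal_rpow_of_nonneg (abs_nonneg x) hp, show (4 : ℝ≥0∞) = ENNReal.ofReal 4 by simp,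
    ← ENNReal.ofReal_mul (by norm_num), ENNReal.one_le_ofReal]
  have h1 := Real.rpow_le_rpow (by norm_num) hx hp
  have h2 := Real.rpow_le_rpow_of_exponent_ge (show (0 : ℝ) < 1 / 4 by norm_num) (by norm_num) hp1
  rw [Real.rpow_one] at h2
  linarith

theorem lintegral_sphereIntegrand_le : ∃ C : ℝ≥0∞, C ≠ ∞ ∧ ∀ A B G : ℝ → ℝ≥0∞,
    Measurable A → Measurable B → Measurable G →
    ∫⁻ σ, sphereIntegrand A B G σ ∂normSphere 3 ≤
      C * ((∫⁻ x, G x) ^ (1 / 5 : ℝ) * (∫⁻ x, A x) ^ (3 / 5 : ℝ) * (∫⁻ x, B x) ^ (3 / 5 : ℝ)) := by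
  obtain ⟨C₁, hC₁, h₁⟩ := lintegral_abs_zero_mul_sphereIntegrand_le
  obtain ⟨C₂, hC₂, h₂⟩ := lintegral_abs_one_mul_sphereIntegrand_le
  obtain ⟨C₃, hC₃, h₃⟩ := lintegral_abs_sum_mul_sphereIntegrand_le
  refine ⟨4 * (C₁ + C₂ + C₃), by finiteness, fun A B G hA hB hG ↦ ?_⟩
  have hm := measurable_sphereIntegrand hA hB hG
  rw [mul_assoc, add_mul, add_mul]
  grw [← h₁ A B G hA hB hG, ← h₂ A B G hA hB hG, ← h₃ A B G hA hB hG]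
  rw [← lintegral_add_left (by fun_prop), ← lintegral_add_left (by fun_prop),
    ← lintegral_const_mul _ (by fun_prop)]
  refine lintegral_mono_ae ?_
  filter_upwards [ae_norm_eq_one] with σ hσ
  rw [← add_mul, ← add_mul, ← mul_assoc]
  refine le_mul_of_one_le_left' ?_
  rw [mul_add, mul_add]
  rcases le_or_gt (1 / 4) |σ 0| with h | h
  · exact le_add_right (le_add_right (one_le_four_mul_rpow h (by norm_num) (by norm_num)))
  rcases le_or_gt (1 / 4) |σ 1| with h' | h'
  · exact le_add_right (le_add_left (one_le_four_mul_rpow h' (by norm_num) (by norm_num)))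
  refine le_add_left (one_le_four_mul_rpow ?_ (by norm_num) (by norm_num))
  rw [abs_lt] at h h'
  by_contra! h2
  rw [abs_lt] at h2
  have : σ 2 ^ 2 < (3 / 4) ^ 2 := sq_lt_sq' (by linarith) (by linarith)
  nlinarith

theorem lintegral_mul_lintegral_normSphere_le : ∃ C : ℝ≥0∞, C ≠ ∞ ∧ ∀ f₀ f₁ f₂ g : ℝ → ℝ≥0∞,
    Measurable f₀ → Measurable f₁ → Measurable f₂ → Measurable g →
    ∫⁻ x, g x * ∫⁻ σ, f₀ (x - σ 0) * f₁ (x - σ 1) * f₂ (x - σ 2) ∂normSphere 3 ≤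
      C * (∫⁻ x, f₀ x ^ (5 / 3 : ℝ)) ^ (3 / 5 : ℝ) * (∫⁻ x, f₁ x ^ (5 / 3 : ℝ)) ^ (3 / 5 : ℝ) *
        (∫⁻ x, f₂ x) * (∫⁻ x, g x ^ (5 : ℝ)) ^ (1 / 5 : ℝ) := by
  obtain ⟨C, hC, h⟩ := lintegral_sphereIntegrand_le
  refine ⟨C, hC, fun f₀ f₁ f₂ g h₀ h₁ h₂ hg ↦ ?_⟩
  have key (u : ℝ) : ∫⁻ σ, g (u + σ 2) * f₀ (u + (σ 2 - σ 0)) * f₁ (u + (σ 2 - σ 1))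
      ∂normSphere 3 ≤ C * ((∫⁻ x, g x ^ (5 : ℝ)) ^ (1 / 5 : ℝ) *
        (∫⁻ x, f₀ x ^ (5 / 3 : ℝ)) ^ (3 / 5 : ℝ) * (∫⁻ x, f₁ x ^ (5 / 3 : ℝ)) ^ (3 / 5 : ℝ)) := by
    have := h (fun s ↦ f₀ (u + s) ^ (5 / 3 : ℝ)) (fun s ↦ f₁ (u + s) ^ (5 / 3 : ℝ))
      (fun s ↦ g (u + s) ^ (5 : ℝ)) (by fun_prop) (by fun_prop) (by fun_prop)
    rw [lintegral_add_left_eq_self (fun s ↦ f₀ s ^ (5 / 3 : ℝ)),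
      lintegral_add_left_eq_self (fun s ↦ f₁ s ^ (5 / 3 : ℝ)),
      lintegral_add_left_eq_self (fun s ↦ g s ^ (5 : ℝ))] at this
    convert this using 3 with σ
    simp only [sphereIntegrand, ← ENNReal.rpow_mul]
    norm_num
  calc _ = ∫⁻ x, ∫⁻ σ, g x * (f₀ (x - σ 0) * f₁ (x - σ 1) * f₂ (x - σ 2)) ∂normSphere 3 :=
        lintegral_congr fun x ↦ (lintegral_const_mul _ (by fun_prop)).symm
    _ = ∫⁻ σ, (∫⁻ x, g x * (f₀ (x - σ 0) * f₁ (x - σ 1) * f₂ (x - σ 2))) ∂normSphere 3 :=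
        lintegral_lintegral_swap (by fun_prop)
    _ = ∫⁻ σ, (∫⁻ u, f₂ u * (g (u + σ 2) * f₀ (u + (σ 2 - σ 0)) * f₁ (u + (σ 2 - σ 1))))
          ∂normSphere 3 := by
        refine lintegral_congr fun σ ↦ ?_
        rw [← lintegral_add_right_eq_self _ (σ 2)]
        refine lintegral_congr fun u ↦ ?_
        rw [add_sub_cancel_right, add_sub_assoc, add_sub_assoc]
        ring
    _ = ∫⁻ u, ∫⁻ σ, f₂ u * (g (u + σ 2) * f₀ (u + (σ 2 - σ 0)) * f₁ (u + (σ 2 - σ 1)))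
          ∂normSphere 3 :=
        lintegral_lintegral_swap (by fun_prop)
    _ = ∫⁻ u, f₂ u * ∫⁻ σ, g (u + σ 2) * f₀ (u + (σ 2 - σ 0)) * f₁ (u + (σ 2 - σ 1))
          ∂normSphere 3 :=
        lintegral_congr fun u ↦ lintegral_const_mul _ (by fun_prop)
    _ ≤ _ := lintegral_mono fun u ↦ mul_le_mul' le_rfl (key u)
    _ = _ := by
        rw [lintegral_mul_const _ h₂]
        ring

/-- The converse of Hölder's inequality for the exponents `5 / 4` and `5`. -/
theorem lintegral_rpow_le_of_forall_lintegral_mul_le {T : ℝ → ℝ≥0∞} (hT : Measurable T) {M : ℝ≥0∞}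
    (h : ∀ g : ℝ → ℝ≥0∞, Measurable g → ∫⁻ x, g x * T x ≤ M * (∫⁻ x, g x ^ (5 : ℝ)) ^ (1 / 5 : ℝ)) :
    (∫⁻ x, T x ^ (5 / 4 : ℝ)) ^ (4 / 5 : ℝ) ≤ M := by
  set k : ℕ → ℝ → ℝ≥0∞ := fun N ↦ (Set.Icc (-N : ℝ) N).indicator fun x ↦ min (T x) N
  have hk (N : ℕ) : Measurable (k N) := (hT.min measurable_const).indicator measurableSet_Icc
  have hkT (N : ℕ) (x : ℝ) : k N x ≤ T x :=
    Set.indicator_apply_le' (fun _ ↦ min_le_left _ _) (fun _ ↦ zero_le)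
  have hlim (x : ℝ) : Filter.Tendsto (fun N ↦ k N x ^ (5 / 4 : ℝ)) Filter.atTop
      (nhds (T x ^ (5 / 4 : ℝ))) := by
    refine (ENNReal.continuous_rpow_const.tendsto _).comp ?_
    have h1 : Filter.Tendsto (fun N : ℕ ↦ min (T x) N) Filter.atTop (nhds (T x)) := by
      simpa using tendsto_const_nhds.min ENNReal.tendsto_nat_nhds_top
    refine h1.congr' ?_
    filter_upwards [tendsto_natCast_atTop_atTop.eventually_ge_atTop |x|] with N hN
    simp only [k, Set.indicator_of_mem (show x ∈ Set.Icc (-N : ℝ) N from abs_le.1 hN)]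
  have hfin (N : ℕ) : ∫⁻ x, k N x ^ (5 / 4 : ℝ) ≠ ∞ := by
    refine ne_top_of_le_ne_top (b := ∫⁻ x in Set.Icc (-N : ℝ) N, (N : ℝ≥0∞) ^ (5 / 4 : ℝ))
      (by rw [setLIntegral_const, Real.volume_Icc]; finiteness) ?_
    rw [← lintegral_indicator measurableSet_Icc]
    refine lintegral_mono fun x ↦ ?_
    by_cases hx : x ∈ Set.Icc (-N : ℝ) N
    · simp only [k, Set.indicator_of_mem hx]
      gcongr
      exact min_le_right _ _
    · simp [k, Set.indicator_of_notMem hx]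
  have hbd (N : ℕ) : ∫⁻ x, k N x ^ (5 / 4 : ℝ) ≤ M ^ (5 / 4 : ℝ) := by
    have h1 := h (fun x ↦ k N x ^ (1 / 4 : ℝ)) (by fun_prop)
    simp only [← ENNReal.rpow_mul, show (1 / 4 : ℝ) * 5 = 5 / 4 by norm_num] at h1
    have h2 : ∫⁻ x, k N x ^ (5 / 4 : ℝ) ≤ ∫⁻ x, k N x ^ (1 / 4 : ℝ) * T x := by
      refine lintegral_mono fun x ↦ ?_
      grw [← hkT N x]
      rw [show (5 / 4 : ℝ) = 1 / 4 + 1 by norm_num,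
        ENNReal.rpow_add_of_nonneg _ _ (by norm_num) (by norm_num), ENNReal.rpow_one]
    have h3 := h2.trans h1
    set I := ∫⁻ x, k N x ^ (5 / 4 : ℝ)
    rcases eq_or_ne I 0 with h0 | h0
    · simp [h0]
    have h4 : I ^ (4 / 5 : ℝ) ≤ M := by
      rw [← ENNReal.mul_le_mul_iff_left (c := I ^ (1 / 5 : ℝ)) (by simp [h0, hfin N, I])
        (by have := hfin N; finiteness),
        ← ENNReal.rpow_add_of_nonneg _ _ (by norm_num) (by norm_num)]
      norm_num at h3 ⊢
      exact h3
    calc I = (I ^ (4 / 5 : ℝ)) ^ (5 / 4 : ℝ) := by rw [← ENNReal.rpow_mul]; norm_num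
      _ ≤ _ := by gcongr
  have hle : ∫⁻ x, T x ^ (5 / 4 : ℝ) ≤ M ^ (5 / 4 : ℝ) := by
    calc _ = ∫⁻ x, Filter.liminf (fun N ↦ k N x ^ (5 / 4 : ℝ)) Filter.atTop :=
          lintegral_congr fun x ↦ (hlim x).liminf_eq.symm
      _ ≤ _ := lintegral_liminf_le fun N ↦ by fun_prop
      _ ≤ _ := Filter.liminf_le_liminf (Filter.Eventually.of_forall hbd)
      _ = _ := Filter.liminf_const _
  calc _ ≤ (M ^ (5 / 4 : ℝ)) ^ (4 / 5 : ℝ) := by gcongr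
    _ = M := by rw [← ENNReal.rpow_mul]; norm_num

theorem measurable_sphAvg_three {f : Fin 3 → ℝ → ℝ} (hf : ∀ j, Measurable (f j)) :
    Measurable (sphAvg 3 f) := by
  refine Measurable.lintegral_prod_right' (f := fun p : ℝ × EuclideanSpace ℝ (Fin 3) ↦
    ∏ j, ENNReal.ofReal (f j (p.1 - p.2 j))) ?_
  fun_prop

theorem strong_type_at_N_star3 :
    ∃ C : ℝ, 0 < C ∧ ∀ f : Fin 3 → ℝ → ℝ,
      (∀ j, Measurable (f j)) → (∀ j x, 0 ≤ f j x) →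
      lpNorm (5 / 4) (sphAvg 3 f) ≤ ENNReal.ofReal C *
        lpNorm (5 / 3) (fun x => ENNReal.ofReal (f 0 x)) *
        lpNorm (5 / 3) (fun x => ENNReal.ofReal (f 1 x)) *
        lpNorm 1 (fun x => ENNReal.ofReal (f 2 x)) := by
  obtain ⟨C, hC, h⟩ := lintegral_mul_lintegral_normSphere_le
  refine ⟨C.toReal + 1, by positivity, fun f hf _ ↦ ?_⟩
  have hCle : C ≤ ENNReal.ofReal (C.toReal + 1) := by
    rw [ENNReal.le_ofReal_iff_toReal_le hC (by positivity)]
    linarith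
  have e54 : (5 / 4 : ℝ≥0∞) ≠ ∞ := by finiteness
  have e53 : (5 / 3 : ℝ≥0∞) ≠ ∞ := by finiteness
  simp only [_root_.lpNorm, e54, e53, ENNReal.one_ne_top, if_false, ENNReal.toReal_div,
    ENNReal.toReal_ofNat, ENNReal.toReal_one, one_div_div, ENNReal.rpow_one, div_one]
  refine lintegral_rpow_le_of_forall_lintegral_mul_le (measurable_sphAvg_three hf) fun g hg ↦ ?_
  grw [← hCle]
  simp only [sphAvg, Fin.prod_univ_three]
  exact h _ _ _ g (hf 0).ennreal_ofReal (hf 1).ennreal_ofReal (hf 2).ennreal_ofReal hg
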